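/- Let 𝒜 be a locally finite L-structure, ℬ a locally finite L'-structure, and (g, f) a semi-retraction between 𝒜 and ℬ. For a finite substructure A of 𝒜 set F(A) = ⟨g(A)⟩_ℬ, and for a finitely generated substructure C of ℬ set G(C) = ⟨f(C)⟩_𝒜. Then: (i) for all finite substructures A, B of 𝒜 and every L-embedding v : A → B, there is a unique L'-embedding g(v)' : F(A) → F(B) satisfying g(v)'(g(a)) = g(v(a)) for all a ∈ A; (ii) for every finitely generated substructure C of ℬ and every L'-embedding ψ : F(B) → C, the map Φ_{B,C}(ψ) : B → G(C) defined by b ↦ f(ψ(g(b))) is an L-embedding; and (iii) Φ_{A,C}(ψ ∘ g(v)') = Φ_{B,C}(ψ) ∘ v. (Hence (F, G, Φ) is a pre-adjunction between age(𝒜) and age(ℬ) with embeddings as morphisms.) -/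

import Mathlib

open FirstOrder FirstOrder.Language

/-- Two same-length tuples have the same quantifier-free type over ∅. -/
def SameQfType (L : FirstOrder.Language) (M : Type*) [L.Structure M] {n : ℕ}
    (x y : Fin n → M) : Prop :=
  ∀ φ : L.Formula (Fin n), φ.IsQF → (φ.Realize x ↔ φ.Realize y)

/-- A qftp-respecting injection between structures in possibly different languages. -/
def QftpRespecting (L L' : FirstOrder.Language) (M N : Type*) [L.Structure M] [L'.Structure N]
    (h : M → N) : Prop :=
  Function.Injective h ∧
    ∀ (n : ℕ) (x y : Fin n → M), SameQfType L M x y → SameQfType L' N (h ∘ x) (h ∘ y)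

/-- `(g, f)` is a semi-retraction between `M` and `N`: both maps are qftp-respecting
injections and `f ∘ g` is qftp-preserving (equivalently, an `L`-embedding of `M` into `M`). -/
def IsSemiRetraction (L L' : FirstOrder.Language) (M N : Type*)
    [L.Structure M] [L'.Structure N] (g : M → N) (f : N → M) : Prop :=
  QftpRespecting L L' M N g ∧ QftpRespecting L' L N M f ∧
    ∀ (n : ℕ) (x : Fin n → M), SameQfType L M x (f ∘ g ∘ x)

/-- `M` is locally finite: every finitely generated substructure is finite. -/
def StructLocallyFinite (L : FirstOrder.Language) (M : Type*) [L.Structure M] : Prop :=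
  ∀ S : L.Substructure M, S.FG → (S : Set M).Finite

/-- `M → (B)^A_{r,d}` for substructures. -/
def ArrowSub (L : FirstOrder.Language) (M : Type*) [L.Structure M]
    (A B : L.Substructure M) (r d : ℕ) : Prop :=
  ∀ c : L.Substructure M → Fin r, ∃ B' : L.Substructure M,
    Nonempty (B' ≃[L] B) ∧
      (c '' {A' : L.Substructure M | A' ≤ B' ∧ Nonempty (A' ≃[L] A)}).ncard ≤ d

/-- `M →ᵉ (B)^A_{r,d}` for embeddings. -/
def ArrowEmb (L : FirstOrder.Language) (M : Type*) [L.Structure M]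
    (A B : L.Substructure M) (r d : ℕ) : Prop :=
  ∀ c : (A ↪[L] M) → Fin r, ∃ h : B ↪[L] M,
    (c '' {j : A ↪[L] M | ∃ e : A ↪[L] B, j = h.comp e}).ncard ≤ d

/-- A structure is rigid if its only automorphism is the identity. -/
def IsRigidStructure (L : FirstOrder.Language) (M : Type*) [L.Structure M] : Prop :=
  ∀ σ : M ≃[L] M, ∀ x : M, σ x = x


namespace SameQfType

variable {L : FirstOrder.Language} {M : Type*} [L.Structure M] {n : ℕ} {x y z : Fin n → M}

theorem trans (h : SameQfType L M x y) (h' : SameQfType L M y z) : SameQfType L M x z :=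
  fun φ hφ => (h φ hφ).trans (h' φ hφ)

theorem realize_term_eq_iff (h : SameQfType L M x y) (s t : L.Term (Fin n)) :
    s.realize x = t.realize x ↔ s.realize y = t.realize y := by
  simpa only [Formula.realize_equal] using
    h (s.equal t) (BoundedFormula.IsAtomic.equal _ _).isQF

theorem relMap_term_iff (h : SameQfType L M x y) {k : ℕ} (R : L.Relations k)
    (ts : Fin k → L.Term (Fin n)) :
    Structure.RelMap R (fun i => (ts i).realize x) ↔
      Structure.RelMap R (fun i => (ts i).realize y) := by
  simpa only [Formula.realize_rel] using
    h (R.formula ts) (BoundedFormula.IsAtomic.rel _ _).isQF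

/-- An embedding between substructures preserves quantifier-free types computed in `M`. -/
theorem of_embedding {S T : L.Substructure M} (e : S ↪[L] T) (x : Fin n → S) :
    SameQfType L M (fun i => (x i : M)) (fun i => (e (x i) : M)) := by
  have key {P : L.Substructure M} (u : Fin n → P) (φ : L.Formula (Fin n)) (hφ : φ.IsQF) :
      φ.Realize (fun i => (u i : M)) ↔ φ.Realize u := by
    have := hφ.realize_embedding P.subtype (v := u) (xs := default)
    rw [Formula.Realize, Formula.Realize, ← this]
    exact iff_of_eq (congrArg _ (Subsingleton.elim _ _))
  intro φ hφ
  rw [key x φ hφ, key (fun i => e (x i)) φ hφ]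
  have := hφ.realize_embedding e (v := x) (xs := default)
  rw [Formula.Realize, Formula.Realize, ← this]
  exact iff_of_eq (congrArg _ (Subsingleton.elim _ _))

/-- A map between generating tuples of the same quantifier-free type extends to an embedding of
the generated substructure. -/
theorem exists_embedding (h : SameQfType L M x y) {S T : L.Substructure M}
    (hS : S = Substructure.closure L (Set.range x)) (hT : ∀ i, y i ∈ T) :
    ∃ e : S ↪[L] T, ∀ i (hi : x i ∈ S), (e ⟨x i, hi⟩ : M) = y i := by
  have hterm (s : S) : ∃ t : L.Term (Fin n), t.realize x = s := by
    obtain ⟨s, hs⟩ := s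
    rw [hS, Substructure.mem_closure_iff_exists_term] at hs
    obtain ⟨t, rfl⟩ := hs
    choose c hc using fun a : Set.range x => a.2
    refine ⟨t.relabel c, ?_⟩
    rw [Term.realize_relabel]
    exact congrArg (t.realize ·) (funext hc)
  choose t ht using hterm
  refine ⟨{ toFun := fun s => ⟨(t s).realize y, (t s).realize_mem y hT⟩
            inj' := fun a b hab => ?_
            map_fun' := fun {k} F a => ?_
            map_rel' := fun {k} R a => ?_ }, fun i hi => ?_⟩
  · have := (h.realize_term_eq_iff _ _).2 (congrArg Subtype.val hab)
    rw [ht, ht] at this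
    exact Subtype.ext this
  · apply Subtype.ext
    refine (h.realize_term_eq_iff (t _) (Term.func F fun i => t (a i))).1 ?_
    simp only [Term.realize_func, ht]
    rfl
  · refine (h.relMap_term_iff R fun i => t (a i)).symm.trans ?_
    simp only [ht]
    rfl
  · exact (h.realize_term_eq_iff (t _) (Term.var i)).1 (ht _)

end SameQfType

/-- Theorem 6.5 / `preadjage`: a semi-retraction `(g, f)` between locally
finite structures `𝒜` and `ℬ` yields a pre-adjunction between `age(𝒜)` and `age(ℬ)` with
embeddings as morphisms, where `F(A) = ⟨g(A)⟩_ℬ` and `G(C) = ⟨f(C)⟩_𝒜`: (i) every embedding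
`v : A → B` extends uniquely to an embedding `g(v)' : F(A) → F(B)` with `g(v)'(g a) = g (v a)`;
(ii) for every finitely generated `C ⊆ ℬ` and embedding `ψ : F(B) → C`, the map
`Φ_{B,C}(ψ) : b ↦ f(ψ(g b))` is an embedding `B → G(C)`; and (iii)
`Φ_{A,C}(ψ ∘ g(v)') = Φ_{B,C}(ψ) ∘ v`. -/
theorem semiRetraction_gives_preadjunction_on_ages
    {L L' : FirstOrder.Language} {M N : Type*} [L.Structure M] [L'.Structure N]
    (g : M → N) (f : N → M)
    (hlfA : StructLocallyFinite L M) (hlfB : StructLocallyFinite L' N)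
    (hsr : IsSemiRetraction L L' M N g f)
    (A B : L.Substructure M) (hAfin : (A : Set M).Finite) (hBfin : (B : Set M).Finite)
    (v : A ↪[L] B) :
    ∃ w : (Substructure.closure L' (g '' (A : Set M))) ↪[L']
        (Substructure.closure L' (g '' (B : Set M))),
      -- (i) `w = g(v)'` extends `g(v)` ...
      (∀ (x : M) (hx : x ∈ A),
        (w ⟨g x, Substructure.subset_closure (Set.mem_image_of_mem g hx)⟩ : N)
          = g (v ⟨x, hx⟩)) ∧
      -- ... uniquely
      (∀ w' : (Substructure.closure L' (g '' (A : Set M))) ↪[L']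
          (Substructure.closure L' (g '' (B : Set M))),
        (∀ (x : M) (hx : x ∈ A),
          (w' ⟨g x, Substructure.subset_closure (Set.mem_image_of_mem g hx)⟩ : N)
            = g (v ⟨x, hx⟩)) → w' = w) ∧
      ∀ (C : L'.Substructure N), C.FG →
        ∀ ψ : (Substructure.closure L' (g '' (B : Set M))) ↪[L'] C,
          -- (ii) `Φ_{B,C}(ψ) : b ↦ f (ψ (g b))` is an embedding `B → G(C)`
          ∃ Φψ : B ↪[L] (Substructure.closure L (f '' (C : Set N))),
            (∀ (x : M) (hx : x ∈ B),
              (Φψ ⟨x, hx⟩ : M)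
                = f (ψ ⟨g x, Substructure.subset_closure (Set.mem_image_of_mem g hx)⟩ : N)) ∧
            ∃ Φψw : A ↪[L] (Substructure.closure L (f '' (C : Set N))),
              (∀ (x : M) (hx : x ∈ A),
                (Φψw ⟨x, hx⟩ : M)
                  = f (ψ (w ⟨g x, Substructure.subset_closure (Set.mem_image_of_mem g hx)⟩)
                      : N)) ∧
              -- (iii) `Φ_{A,C}(ψ ∘ g(v)') = Φ_{B,C}(ψ) ∘ v`
              ∀ (x : M) (hx : x ∈ A), Φψw ⟨x, hx⟩ = Φψ (v ⟨x, hx⟩) := by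
  obtain ⟨⟨-, hg⟩, ⟨-, hf⟩, hfg⟩ := hsr
  -- `Φ_{D,C}(ψ)` is an embedding for every finite `D` and every embedding `ψ : F(D) → C`
  have hΦ (D : L.Substructure M) (hD : (D : Set M).Finite) (C : L'.Substructure N)
      (ψ : Substructure.closure L' (g '' (D : Set M)) ↪[L'] C) :
      ∃ Φψ : D ↪[L] Substructure.closure L (f '' (C : Set N)), ∀ (x : M) (hx : x ∈ D),
        (Φψ ⟨x, hx⟩ : M)
          = f (ψ ⟨g x, Substructure.subset_closure (Set.mem_image_of_mem g hx)⟩ : N) := by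
    obtain ⟨n, d, -, hd⟩ := hD.fin_param
    have hdD (i : Fin n) : d i ∈ D := hd.subset (Set.mem_range_self i)
    have hψ := SameQfType.of_embedding ψ fun i =>
      ⟨g (d i), Substructure.subset_closure (Set.mem_image_of_mem g (hdD i))⟩
    obtain ⟨e, he⟩ := ((hfg n d).trans (hf n _ _ hψ)).exists_embedding (S := D)
      (T := Substructure.closure L (f '' (C : Set N))) (by rw [hd, Substructure.closure_eq])
      fun i => Substructure.subset_closure (Set.mem_image_of_mem f (ψ _).2)
    refine ⟨e, fun x hx => ?_⟩
    obtain ⟨i, rfl⟩ := hd.superset hx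
    exact he i hx
  obtain ⟨n, a, -, ha⟩ := hAfin.fin_param
  have haA (i : Fin n) : a i ∈ A := ha.subset (Set.mem_range_self i)
  obtain ⟨w, hw⟩ := (hg n _ _ (SameQfType.of_embedding v fun i => ⟨a i, haA i⟩)).exists_embedding
    (S := Substructure.closure L' (g '' (A : Set M)))
    (T := Substructure.closure L' (g '' (B : Set M))) (by rw [← ha, ← Set.range_comp])
    fun i => Substructure.subset_closure (Set.mem_image_of_mem g (v _).2)
  have hwg (x : M) (hx : x ∈ A) :
      (w ⟨g x, Substructure.subset_closure (Set.mem_image_of_mem g hx)⟩ : N)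
        = g (v ⟨x, hx⟩) := by
    obtain ⟨i, rfl⟩ := ha.superset hx
    exact hw i _
  refine ⟨w, hwg, fun w' hw' => ?_, fun C _ ψ => ?_⟩
  · ext ⟨s, hs⟩
    refine Substructure.closure_induction' (L := L') (g '' (A : Set M))
      (p := fun s hs => (w' ⟨s, hs⟩ : N) = w ⟨s, hs⟩) ?_ ?_ hs
    · rintro _ ⟨x, hx, rfl⟩
      rw [hw' x hx, hwg x hx]
    · intro k F u hu
      choose hu hwu using hu
      refine ⟨Substructure.fun_mem _ F u hu, ?_⟩
      have heq := congrArg (Structure.funMap F) (funext fun i => Subtype.ext (hwu i) :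
        (fun i => w' ⟨u i, hu i⟩) = fun i => w ⟨u i, hu i⟩)
      exact congrArg Subtype.val ((w'.map_fun F fun i => ⟨u i, hu i⟩).trans
        (heq.trans (w.map_fun F fun i => ⟨u i, hu i⟩).symm))
  · obtain ⟨Φψ, hΦψ⟩ := hΦ B hBfin C ψ
    obtain ⟨Φψw, hΦψw⟩ := hΦ A hAfin C (ψ.comp w)
    refine ⟨Φψ, hΦψ, Φψw, hΦψw, fun x hx => Subtype.ext ?_⟩
    rw [hΦψw x hx, hΦψ _ (v ⟨x, hx⟩).2, Embedding.comp_apply]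
    exact congrArg (fun s => f (ψ s)) (Subtype.ext (hwg x hx))
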